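/- Suppose the action space is trivial, |𝒰| = 1 (uncontrolled dynamics), so that there is a unique policy ensemble 𝛑 with generated mean field ensemble 𝛍 = Ψ(𝛑). Under Assumption (W), for every measurable f : 𝒳×[0,1] → ℝ with |f| ≤ M_f and every t ∈ 𝒯, E[|𝛍^N_t(f) − 𝛍_t(f)|] → 0 as N → ∞; moreover, if ‖W_N − W‖_{L∞→L1} = O(1/√N), then this convergence is at rate O(1/√N). -/

import Mathlib

open MeasureTheory Filter
open scoped BigOperators

namespace GMFG

variable {𝒳 𝒰 : Type*}

/-- The probability simplex 𝒫(𝒳) on a finite set, as probability mass functions. -/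
def simplex (𝒳 : Type*) [Fintype 𝒳] : Set (𝒳 → ℝ) :=
  {p | (∀ x, 0 ≤ p x) ∧ ∑ x, p x = 1}

/-- The set ℬ₁(𝒳) of (sub-probability) measures with total mass at most 1,
as mass functions. -/
def subProb (𝒳 : Type*) [Fintype 𝒳] : Set (𝒳 → ℝ) :=
  {p | (∀ x, 0 ≤ p x) ∧ ∑ x, p x ≤ 1}

/-- L¹ distance between measures on a finite set. -/
noncomputable def l1dist [Fintype 𝒳] (ν ν' : 𝒳 → ℝ) : ℝ := ∑ x, |ν x - ν' x|

/-- Markovian feedback policies π ∈ Π = 𝒫(𝒰)^{𝒯×𝒳}. -/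
def IsPolicy [Fintype 𝒰] (π : ℕ → 𝒳 → 𝒰 → ℝ) : Prop :=
  ∀ t x, (∀ u, 0 ≤ π t x u) ∧ ∑ u, π t x u = 1

/-- P : 𝒳×𝒰×ℬ₁(𝒳) → 𝒫(𝒳) is a transition kernel. -/
def IsKernel [Fintype 𝒳] [Fintype 𝒰] (P : 𝒳 → 𝒰 → (𝒳 → ℝ) → 𝒳 → ℝ) : Prop :=
  ∀ x u ν, ν ∈ subProb 𝒳 → P x u ν ∈ simplex 𝒳

/-- Lipschitz continuity of the transition kernel w.r.t. the L¹ norm. -/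
def KernelLipschitz [Fintype 𝒳] [Fintype 𝒰] (P : 𝒳 → 𝒰 → (𝒳 → ℝ) → 𝒳 → ℝ) (L : ℝ) : Prop :=
  ∀ x u ν ν', ν ∈ subProb 𝒳 → ν' ∈ subProb 𝒳 → l1dist (P x u ν) (P x u ν') ≤ L * l1dist ν ν'

/-- Lipschitz continuity of the reward w.r.t. the L¹ norm. -/
def RewardLipschitz [Fintype 𝒳] [Fintype 𝒰] (r : 𝒳 → 𝒰 → (𝒳 → ℝ) → ℝ) (L : ℝ) : Prop :=
  ∀ x u ν ν', ν ∈ subProb 𝒳 → ν' ∈ subProb 𝒳 → |r x u ν - r x u ν'| ≤ L * l1dist ν ν'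

/-- A graphon: symmetric, measurable, [0,1]-valued. -/
def IsGraphon (W : ℝ → ℝ → ℝ) : Prop :=
  Measurable (Function.uncurry W) ∧ (∀ a b, W a b = W b a) ∧ ∀ a b, W a b ∈ Set.Icc (0:ℝ) 1

/-- Lipschitz continuity of a graphon on [0,1]². -/
def GraphonLipschitz (W : ℝ → ℝ → ℝ) (L : ℝ) : Prop :=
  ∀ a b a' b' : ℝ, a ∈ Set.Icc (0:ℝ) 1 → b ∈ Set.Icc (0:ℝ) 1 → a' ∈ Set.Icc (0:ℝ) 1 →
    b' ∈ Set.Icc (0:ℝ) 1 → |W a b - W a' b'| ≤ L * (|a - a'| + |b - b'|)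

/-- The neighborhood mean field 𝔾^α = ∫₀¹ W(α,β) ν^β dβ of a state marginal ensemble ν. -/
noncomputable def nbhd [Fintype 𝒳] (W : ℝ → ℝ → ℝ) (ν : ℝ → 𝒳 → ℝ) (α : ℝ) : 𝒳 → ℝ :=
  fun x => ∫ β in Set.Ioc (0:ℝ) 1, W α β * ν β x

/-- 𝛍 = Ψ(𝛑): the (measurable) mean field ensemble generated by the policy ensemble 𝛑,
via μ^α_0 = μ₀ and
μ^α_{t+1}(x') = Σ_{x,u} μ^α_t(x) π^α_t(u|x) P(x'|x,u,𝔾^α_t). -/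
def IsMeanFieldOf [Fintype 𝒳] [Fintype 𝒰] (W : ℝ → ℝ → ℝ) (P : 𝒳 → 𝒰 → (𝒳 → ℝ) → 𝒳 → ℝ)
    (μ0 : 𝒳 → ℝ) (πe : ℝ → ℕ → 𝒳 → 𝒰 → ℝ) (μ : ℕ → ℝ → 𝒳 → ℝ) : Prop :=
  (∀ t x, Measurable fun α => μ t α x) ∧
  (∀ α ∈ Set.Icc (0:ℝ) 1, μ 0 α = μ0) ∧
  ∀ t : ℕ, ∀ α ∈ Set.Icc (0:ℝ) 1, ∀ x' : 𝒳,
    μ (t+1) α x' = ∑ x, μ t α x * ∑ u, πe α t x u * P x u (nbhd W (μ t) α) x'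

/-- The law of the state of a single mean field agent with neighborhood mean field
G and policy π: X_0 ∼ μ₀, U_t ∼ π_t(·|X_t), X_{t+1} ∼ P(·|X_t,U_t,G_t). -/
noncomputable def stateLaw [Fintype 𝒳] [Fintype 𝒰] (P : 𝒳 → 𝒰 → (𝒳 → ℝ) → 𝒳 → ℝ)
    (μ0 : 𝒳 → ℝ) (G : ℕ → 𝒳 → ℝ) (π : ℕ → 𝒳 → 𝒰 → ℝ) : ℕ → 𝒳 → ℝ
  | 0 => μ0
  | (t+1) => fun x' => ∑ x, stateLaw P μ0 G π t x * ∑ u, π t x u * P x u (G t) x'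

/-- Mean field objective J(π) = E[Σ_{t<T} r(X_t,U_t,G_t)] of a single agent whose
neighborhood mean field is G. -/
noncomputable def Jmf [Fintype 𝒳] [Fintype 𝒰] (T : ℕ) (r : 𝒳 → 𝒰 → (𝒳 → ℝ) → ℝ)
    (P : 𝒳 → 𝒰 → (𝒳 → ℝ) → 𝒳 → ℝ) (μ0 : 𝒳 → ℝ) (G : ℕ → 𝒳 → ℝ) (π : ℕ → 𝒳 → 𝒰 → ℝ) : ℝ :=
  ∑ t ∈ Finset.range T, ∑ x, stateLaw P μ0 G π t x * ∑ u, π t x u * r x u (G t)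

/-- A Graphon Mean Field Equilibrium: a measurable policy ensemble 𝛑 and mean field
ensemble 𝛍 with 𝛍 = Ψ(𝛑) and π^α optimal for J^𝛍_α for every α ∈ [0,1]. -/
def IsGMFE [Fintype 𝒳] [Fintype 𝒰] (T : ℕ) (W : ℝ → ℝ → ℝ) (P : 𝒳 → 𝒰 → (𝒳 → ℝ) → 𝒳 → ℝ)
    (r : 𝒳 → 𝒰 → (𝒳 → ℝ) → ℝ) (μ0 : 𝒳 → ℝ)
    (πe : ℝ → ℕ → 𝒳 → 𝒰 → ℝ) (μ : ℕ → ℝ → 𝒳 → ℝ) : Prop :=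
  (∀ t x u, Measurable fun α => πe α t x u) ∧
  (∀ α ∈ Set.Icc (0:ℝ) 1, IsPolicy (πe α)) ∧
  IsMeanFieldOf W P μ0 πe μ ∧
  ∀ α ∈ Set.Icc (0:ℝ) 1, ∀ π' : ℕ → 𝒳 → 𝒰 → ℝ, IsPolicy π' →
    Jmf T r P μ0 (fun t => nbhd W (μ t) α) π' ≤ Jmf T r P μ0 (fun t => nbhd W (μ t) α) (πe α)

/-- α ↦ π^α is Lipschitz continuous up to a finite set D of discontinuities. -/
def EnsembleLipschitzUpTo [Fintype 𝒳] [Fintype 𝒰] (πe : ℝ → ℕ → 𝒳 → 𝒰 → ℝ) : Prop :=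
  ∃ (L : ℝ) (D : Finset ℝ), ∀ (t : ℕ) (x : 𝒳) (u : 𝒰),
    ∀ α ∈ Set.Icc (0:ℝ) 1, ∀ β ∈ Set.Icc (0:ℝ) 1,
      (∀ d ∈ D, d ∉ Set.uIcc α β) → |πe α t x u - πe β t x u| ≤ L * |α - β|

/-- Edge indicators of a simple (undirected) graph. -/
def IsEdgeWeights {N : ℕ} (ξ : Fin N → Fin N → ℝ) : Prop :=
  (∀ i j, ξ i j = 0 ∨ ξ i j = 1) ∧ ∀ i j, ξ i j = ξ j i

/-- Empirical neighborhood mean field 𝔾ⁱ = (1/N) Σ_j ξ_{ij} δ_{X^j}. -/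
noncomputable def empNbhd [Fintype 𝒳] [DecidableEq 𝒳] {N : ℕ} (ξ : Fin N → Fin N → ℝ)
    (X : Fin N → 𝒳) (i : Fin N) : 𝒳 → ℝ :=
  fun x => (N : ℝ)⁻¹ * ∑ j, ξ i j * (if X j = x then 1 else 0)

/-- The joint law of the N agents' states at time t: X^i_0 ∼ μ₀ i.i.d.,
U^i_t ∼ π^i_t(·|X^i_t), X^i_{t+1} ∼ P(·|X^i_t,U^i_t,𝔾^i_t) conditionally independently. -/
noncomputable def jointLaw [Fintype 𝒳] [DecidableEq 𝒳] [Fintype 𝒰] {N : ℕ}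
    (P : 𝒳 → 𝒰 → (𝒳 → ℝ) → 𝒳 → ℝ) (μ0 : 𝒳 → ℝ) (ξ : Fin N → Fin N → ℝ)
    (πs : Fin N → ℕ → 𝒳 → 𝒰 → ℝ) : ℕ → (Fin N → 𝒳) → ℝ
  | 0 => fun X => ∏ i, μ0 (X i)
  | (t+1) => fun Y => ∑ X : Fin N → 𝒳, jointLaw P μ0 ξ πs t X *
      ∏ i, ∑ u, πs i t (X i) u * P (X i) u (empNbhd ξ X i) (Y i)

/-- The objective J^N_i = E[Σ_{t<T} r(X^i_t,U^i_t,𝔾^i_t)] of agent i in the N-agent game. -/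
noncomputable def JN [Fintype 𝒳] [DecidableEq 𝒳] [Fintype 𝒰] {N : ℕ} (T : ℕ)
    (r : 𝒳 → 𝒰 → (𝒳 → ℝ) → ℝ) (P : 𝒳 → 𝒰 → (𝒳 → ℝ) → 𝒳 → ℝ) (μ0 : 𝒳 → ℝ)
    (ξ : Fin N → Fin N → ℝ) (πs : Fin N → ℕ → 𝒳 → 𝒰 → ℝ) (i : Fin N) : ℝ :=
  ∑ t ∈ Finset.range T, ∑ X : Fin N → 𝒳, jointLaw P μ0 ξ πs t X *
    ∑ u, πs i t (X i) u * r (X i) u (empNbhd ξ X i)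

/-- Γ_N(𝛑) = (π^{1/N},…,π^{N/N}) (agent i : Fin N has graphon index (i+1)/N). -/
noncomputable def gammaN (πe : ℝ → ℕ → 𝒳 → 𝒰 → ℝ) (N : ℕ) : Fin N → ℕ → 𝒳 → 𝒰 → ℝ :=
  fun i => πe ((((i : ℕ) : ℝ) + 1) / N)

/-- The step graphon W_N of a finite graph: W_N(x,y) = ξ_{⌈Nx⌉,⌈Ny⌉}. -/
noncomputable def stepGraphon {N : ℕ} (ξ : Fin N → Fin N → ℝ) : ℝ → ℝ → ℝ := fun a b =>
  ∑ i : Fin N, ∑ j : Fin N,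
    (if ((i : ℕ) : ℝ) / N < a ∧ a ≤ (((i : ℕ) : ℝ) + 1) / N then 1 else 0) *
    (if ((j : ℕ) : ℝ) / N < b ∧ b ≤ (((j : ℕ) : ℝ) + 1) / N then 1 else 0) * ξ i j

/-- Assumption (W): ‖W_N − W‖_{L∞→L1} → 0, i.e.
sup_{‖g‖∞ ≤ 1} ∫₀¹ |∫₀¹ (W_N(α,β) − W(α,β)) g(β) dβ| dα → 0. -/
def OpConvergesTo (WN : (N : ℕ) → ℝ → ℝ → ℝ) (W : ℝ → ℝ → ℝ) : Prop :=
  ∀ ε > (0:ℝ), ∃ N₀ : ℕ, ∀ N ≥ N₀, ∀ g : ℝ → ℝ, Measurable g → (∀ β, |g β| ≤ 1) →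
    (∫ α in Set.Ioc (0:ℝ) 1, |∫ β in Set.Ioc (0:ℝ) 1, (WN N α β - W α β) * g β|) ≤ ε

/-- ‖W_N − W‖_{L∞→L1} = O(1/√N). -/
def OpRateSqrt (WN : (N : ℕ) → ℝ → ℝ → ℝ) (W : ℝ → ℝ → ℝ) : Prop :=
  ∃ C : ℝ, ∀ N : ℕ, 1 ≤ N → ∀ g : ℝ → ℝ, Measurable g → (∀ β, |g β| ≤ 1) →
    (∫ α in Set.Ioc (0:ℝ) 1, |∫ β in Set.Ioc (0:ℝ) 1, (WN N α β - W α β) * g β|) ≤ C / Real.sqrt N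

/-- 𝛍^N_t(f) = ∫₀¹ f(X^{⌈Nα⌉}, α) dα, the integral of f against the random empirical
step measure ensemble. -/
noncomputable def empInt [Fintype 𝒳] {N : ℕ} (f : 𝒳 → ℝ → ℝ) (X : Fin N → 𝒳) : ℝ :=
  ∑ i : Fin N, ∫ α in Set.Ioc (((i : ℕ) : ℝ) / N) ((((i : ℕ) : ℝ) + 1) / N), f (X i) α

/-- 𝛍_t(f) = ∫₀¹ Σ_x f(x,α) μ^α_t(x) dα. -/
noncomputable def mfInt [Fintype 𝒳] (f : 𝒳 → ℝ → ℝ) (ν : ℝ → 𝒳 → ℝ) : ℝ :=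
  ∫ α in Set.Ioc (0:ℝ) 1, ∑ x, f x α * ν α x

/-- The representative α_m = (m+1)/M of the m-th equivalence class Ĩ_m = (m/M,(m+1)/M]. -/
noncomputable def rep (M : ℕ) (m : Fin M) : ℝ := (((m : ℕ) : ℝ) + 1) / M

/-- Discretized neighborhood mean field 𝔾̂^{α_m} = (1/M) Σ_n W(α_m,α_n) ν^{α_n}. -/
noncomputable def approxNbhd [Fintype 𝒳] {M : ℕ} (W : ℝ → ℝ → ℝ) (ν : Fin M → 𝒳 → ℝ)
    (m : Fin M) : 𝒳 → ℝ :=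
  fun x => (M : ℝ)⁻¹ * ∑ n, W (rep M m) (rep M n) * ν n x

/-- The approximate mean field μ̂ = Ψ̂(𝛑) of the M equivalence classes method. -/
noncomputable def approxMF [Fintype 𝒳] [Fintype 𝒰] {M : ℕ} (W : ℝ → ℝ → ℝ)
    (P : 𝒳 → 𝒰 → (𝒳 → ℝ) → 𝒳 → ℝ) (μ0 : 𝒳 → ℝ) (πm : Fin M → ℕ → 𝒳 → 𝒰 → ℝ) :
    ℕ → Fin M → 𝒳 → ℝ
  | 0 => fun _ => μ0
  | (t+1) => fun m x' => ∑ x, approxMF W P μ0 πm t m x *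
      ∑ u, πm m t x u * P x u (approxNbhd W (approxMF W P μ0 πm t) m) x'

/-- A solution (𝛑, 𝛍) of the M equivalence classes method: 𝛑 is determined by policies
π^{α_m} (one per class), each optimal for the generated approximate mean field 𝛍 = Ψ̂(𝛑). -/
def IsEqClassSolution [Fintype 𝒳] [Fintype 𝒰] (T : ℕ) {M : ℕ} (W : ℝ → ℝ → ℝ)
    (P : 𝒳 → 𝒰 → (𝒳 → ℝ) → 𝒳 → ℝ) (r : 𝒳 → 𝒰 → (𝒳 → ℝ) → ℝ) (μ0 : 𝒳 → ℝ)
    (πm : Fin M → ℕ → 𝒳 → 𝒰 → ℝ) : Prop :=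
  (∀ m, IsPolicy (πm m)) ∧
  ∀ m, ∀ π' : ℕ → 𝒳 → 𝒰 → ℝ, IsPolicy π' →
    Jmf T r P μ0 (fun t => approxNbhd W (approxMF W P μ0 πm t) m) π'
      ≤ Jmf T r P μ0 (fun t => approxNbhd W (approxMF W P μ0 πm t) m) (πm m)

/-- The optimal action value function Q with k steps to go from time t,
Q(t,x,u) = r(x,u,G_t) + Σ_{x'} P(x'|x,u,G_t) max_{u'} Q(t+1,x',u'). -/
noncomputable def Qfun [Fintype 𝒳] [Fintype 𝒰] [Nonempty 𝒰] (r : 𝒳 → 𝒰 → (𝒳 → ℝ) → ℝ)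
    (P : 𝒳 → 𝒰 → (𝒳 → ℝ) → 𝒳 → ℝ) (G : ℕ → 𝒳 → ℝ) : ℕ → ℕ → 𝒳 → 𝒰 → ℝ
  | 0 => fun _ _ _ => 0
  | (k+1) => fun t x u => r x u (G t) + ∑ x', P x u (G t) x' *
      Finset.univ.sup' Finset.univ_nonempty (fun u' => Qfun r P G k (t+1) x' u')

/-- The Boltzmann (softmax) policy Φ̂_η(𝛍) of the M equivalence classes method with
horizon T, temperature η and block mean field ν. -/
noncomputable def boltzmann [Fintype 𝒳] [Fintype 𝒰] [Nonempty 𝒰] (T : ℕ) (η : ℝ)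
    (r : 𝒳 → 𝒰 → (𝒳 → ℝ) → ℝ) (P : 𝒳 → 𝒰 → (𝒳 → ℝ) → 𝒳 → ℝ) (W : ℝ → ℝ → ℝ) {M : ℕ}
    (ν : ℕ → Fin M → 𝒳 → ℝ) : Fin M → ℕ → 𝒳 → 𝒰 → ℝ :=
  fun m t x u =>
    Real.exp (Qfun r P (fun s => approxNbhd W (ν s) m) (T - t) t x u / η) /
      ∑ u' : 𝒰, Real.exp (Qfun r P (fun s => approxNbhd W (ν s) m) (T - t) t x u' / η)

/-- One step 𝛍 ↦ Ψ̂(Φ̂_η(𝛍)) of the Boltzmann fixed point iteration. -/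
noncomputable def boltzIter [Fintype 𝒳] [Fintype 𝒰] [Nonempty 𝒰] (T : ℕ) (η : ℝ)
    (r : 𝒳 → 𝒰 → (𝒳 → ℝ) → ℝ) (P : 𝒳 → 𝒰 → (𝒳 → ℝ) → 𝒳 → ℝ) (W : ℝ → ℝ → ℝ) (μ0 : 𝒳 → ℝ)
    {M : ℕ} (ν : ℕ → Fin M → 𝒳 → ℝ) : ℕ → Fin M → 𝒳 → ℝ :=
  fun t => approxMF W P μ0 (boltzmann T η r P W ν) t


/-! ### Helper lemmas -/

/-- The `i`-th cell of the uniform partition. -/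
def cell (N : ℕ) (i : Fin N) : Set ℝ := Set.Ioc (((i : ℕ) : ℝ) / N) ((((i : ℕ) : ℝ) + 1) / N)

lemma measurableSet_cell (N : ℕ) (i : Fin N) : MeasurableSet (cell N i) := measurableSet_Ioc

lemma cell_subset {N : ℕ} (i : Fin N) : cell N i ⊆ Set.Ioc (0:ℝ) 1 := by
  have hN : (0:ℝ) < N := by exact_mod_cast i.pos
  apply Set.Ioc_subset_Ioc
  · positivity
  · rw [div_le_one hN]
    exact_mod_cast i.isLt

lemma volume_cell {N : ℕ} (i : Fin N) : volume.real (cell N i) = (N:ℝ)⁻¹ := by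
  have hN : (0:ℝ) < N := by exact_mod_cast i.pos
  unfold cell
  rw [Real.volume_real_Ioc_of_le (by gcongr; linarith)]
  field_simp
  ring

lemma cell_unique {N : ℕ} {i j : Fin N} {α : ℝ} (hi : α ∈ cell N i) (hj : α ∈ cell N j) :
    i = j := by
  have hN : (0:ℝ) < N := by exact_mod_cast i.pos
  obtain ⟨h1, h2⟩ := hi
  obtain ⟨h3, h4⟩ := hj
  have a := h1.trans_le h4
  have b := h3.trans_le h2
  rw [div_lt_div_iff_of_pos_right hN] at a b
  have a' : (i:ℕ) < (j:ℕ) + 1 := by exact_mod_cast a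
  have b' : (j:ℕ) < (i:ℕ) + 1 := by exact_mod_cast b
  ext; omega

lemma sum_cells {N : ℕ} (hN : 1 ≤ N) {h : ℝ → ℝ} (hh : IntegrableOn h (Set.Ioc (0:ℝ) 1)) :
    ∑ i : Fin N, ∫ α in cell N i, h α = ∫ α in Set.Ioc (0:ℝ) 1, h α := by
  have hN' : (0:ℝ) < N := by exact_mod_cast hN
  have key := intervalIntegral.sum_integral_adjacent_intervals (μ := volume) (f := h)
    (a := fun k : ℕ => (k:ℝ) / N) (n := N) (by
      intro k hk
      rw [intervalIntegrable_iff_integrableOn_Ioc_of_le (by gcongr; simp)]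
      have := cell_subset (⟨k, hk⟩ : Fin N)
      apply hh.mono_set
      simpa [cell] using this)
  rw [intervalIntegral.integral_of_le (by simp; positivity)] at key
  simp only [Nat.cast_zero, zero_div, div_self hN'.ne'] at key
  rw [← key, Finset.sum_range]
  apply Finset.sum_congr rfl
  intro i _
  rw [intervalIntegral.integral_of_le (by gcongr; simp)]
  simp [cell]

lemma intOn {s : Set ℝ} (hs : MeasurableSet s) (hs' : volume s ≠ ⊤) {h : ℝ → ℝ}
    (hm : Measurable h) {c : ℝ} (hb : ∀ α ∈ s, |h α| ≤ c) : IntegrableOn h s :=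
  Measure.integrableOn_of_bounded hs' hm.aestronglyMeasurable
    ((ae_restrict_iff' hs).2 (ae_of_all _ hb))

lemma intOn01 {h : ℝ → ℝ} (hm : Measurable h) {c : ℝ}
    (hb : ∀ α ∈ Set.Ioc (0:ℝ) 1, |h α| ≤ c) : IntegrableOn h (Set.Ioc (0:ℝ) 1) :=
  intOn measurableSet_Ioc (by simp) hm hb

lemma intOnCell {N : ℕ} (i : Fin N) {h : ℝ → ℝ} (hm : Measurable h) {c : ℝ}
    (hb : ∀ α ∈ Set.Ioc (0:ℝ) 1, |h α| ≤ c) : IntegrableOn h (cell N i) :=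
  (intOn01 hm hb).mono_set (cell_subset i)

lemma cell_int_bound {N : ℕ} (i : Fin N) {h : ℝ → ℝ} {c : ℝ} (hb : ∀ α, |h α| ≤ c) :
    |∫ α in cell N i, h α| ≤ c / N := by
  have := norm_setIntegral_le_of_norm_le_const (μ := volume) (s := cell N i) (f := h) (C := c)
    (by simp [cell]) (fun x _ => hb x)
  rw [volume_cell, ← div_eq_mul_inv] at this
  exact this

/-- sums over product laws factorize -/
lemma sum_prod_fun [Fintype 𝒳] [DecidableEq 𝒳] {N : ℕ} (F : Fin N → 𝒳 → ℝ) :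
    ∑ Y : Fin N → 𝒳, ∏ i, F i (Y i) = ∏ i, ∑ x, F i x := by
  rw [Finset.prod_univ_sum, Fintype.piFinset_univ]

lemma prod_simplex_sum [Fintype 𝒳] [DecidableEq 𝒳] {N : ℕ} {q : Fin N → 𝒳 → ℝ}
    (hq : ∀ i, q i ∈ simplex 𝒳) : ∑ Y : Fin N → 𝒳, ∏ i, q i (Y i) = 1 := by
  rw [sum_prod_fun]
  exact Finset.prod_eq_one fun i _ => (hq i).2

lemma cross_zero [Fintype 𝒳] [DecidableEq 𝒳] {N : ℕ} {q : Fin N → 𝒳 → ℝ}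
    {h : Fin N → 𝒳 → ℝ} (hh : ∀ i, ∑ x, q i x * h i x = 0) {i j : Fin N} (hij : i ≠ j) :
    ∑ Y : Fin N → 𝒳, (∏ k, q k (Y k)) * (h i (Y i) * h j (Y j)) = 0 := by
  have e : ∀ Y : Fin N → 𝒳, (∏ k, q k (Y k)) * (h i (Y i) * h j (Y j)) =
      ∏ k, (q k (Y k) * ((if k = i then h k (Y k) else 1) * (if k = j then h k (Y k) else 1))) := by
    intro Y
    rw [Finset.prod_mul_distrib, Finset.prod_mul_distrib]
    simp
  rw [Finset.sum_congr rfl fun Y _ => e Y, sum_prod_fun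
    (fun k x => q k x * ((if k = i then h k x else 1) * (if k = j then h k x else 1)))]
  apply Finset.prod_eq_zero (Finset.mem_univ i)
  simp [hij, hh]

lemma abs_avg_le [Fintype 𝒳] {q g : 𝒳 → ℝ} (hq : q ∈ simplex 𝒳) {c : ℝ} (hg : ∀ x, |g x| ≤ c) :
    |∑ x, q x * g x| ≤ c := by
  calc |∑ x, q x * g x| ≤ ∑ x, |q x * g x| := Finset.abs_sum_le_sum_abs _ _
    _ ≤ ∑ x, q x * c := by
        apply Finset.sum_le_sum
        intro x _
        rw [abs_mul, abs_of_nonneg (hq.1 x)]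
        exact mul_le_mul_of_nonneg_left (hg x) (hq.1 x)
    _ = c := by rw [← Finset.sum_mul, hq.2, one_mul]

/-- Weak law of large numbers for independent, not identically distributed variables. -/
lemma wlln [Fintype 𝒳] [DecidableEq 𝒳] {N : ℕ} {q : Fin N → 𝒳 → ℝ}
    (hq : ∀ i, q i ∈ simplex 𝒳) {g : Fin N → 𝒳 → ℝ} {c : ℝ} (hc : 0 ≤ c)
    (hg : ∀ i x, |g i x| ≤ c) :
    ∑ Y : Fin N → 𝒳, (∏ i, q i (Y i)) * |∑ i, g i (Y i) - ∑ i, ∑ x, q i x * g i x|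
      ≤ 2 * c * Real.sqrt N := by
  set h : Fin N → 𝒳 → ℝ := fun i x => g i x - ∑ y, q i y * g i y with hdef
  have hh : ∀ i, ∑ x, q i x * h i x = 0 := by
    intro i
    simp only [hdef, mul_sub, Finset.sum_sub_distrib]
    rw [← Finset.sum_mul, (hq i).2]; ring
  have hb : ∀ i x, |h i x| ≤ 2 * c := by
    intro i x
    have h1 := hg i x
    have h2 := abs_avg_le (hq i) (hg i)
    calc |h i x| ≤ |g i x| + |∑ y, q i y * g i y| := abs_sub _ _
      _ ≤ 2 * c := by linarith
  have hp : ∀ Y : Fin N → 𝒳, 0 ≤ ∏ i, q i (Y i) :=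
    fun Y => Finset.prod_nonneg fun i _ => (hq i).1 _
  have hZ : ∀ Y : Fin N → 𝒳, ∑ i, g i (Y i) - ∑ i, ∑ x, q i x * g i x = ∑ i, h i (Y i) := by
    intro Y; simp [hdef, Finset.sum_sub_distrib]
  simp only [hZ]
  have hsq : ∑ Y : Fin N → 𝒳, (∏ i, q i (Y i)) * (∑ i, h i (Y i)) ^ 2 ≤ N * (2 * c) ^ 2 := by
    have e : ∀ Y : Fin N → 𝒳, (∏ i, q i (Y i)) * (∑ i, h i (Y i)) ^ 2 =
        ∑ i, ∑ j, (∏ k, q k (Y k)) * (h i (Y i) * h j (Y j)) := by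
      intro Y
      rw [sq, Finset.sum_mul_sum, Finset.mul_sum]
      simp only [Finset.mul_sum]
    rw [Finset.sum_congr rfl fun Y _ => e Y, Finset.sum_comm]
    calc _ ≤ ∑ i : Fin N, (2 * c) ^ 2 := by
          apply Finset.sum_le_sum
          intro i _
          rw [Finset.sum_comm, Finset.sum_eq_single i]
          · calc _ ≤ ∑ Y : Fin N → 𝒳, (∏ k, q k (Y k)) * (2 * c) ^ 2 := by
                  apply Finset.sum_le_sum
                  intro Y _
                  apply mul_le_mul_of_nonneg_left _ (hp Y)
                  rw [← sq]
                  exact sq_le_sq' (by linarith [(abs_le.1 (hb i (Y i))).1])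
                    (abs_le.1 (hb i (Y i))).2
              _ = _ := by rw [← Finset.sum_mul, prod_simplex_sum hq, one_mul]
          · intro j _ hj
            exact cross_zero hh hj.symm
          · simp
      _ = _ := by simp
  have cs : (∑ Y : Fin N → 𝒳, (∏ i, q i (Y i)) * |∑ i, h i (Y i)|) ^ 2 ≤
      ∑ Y : Fin N → 𝒳, (∏ i, q i (Y i)) * (∑ i, h i (Y i)) ^ 2 := by
    have h2 := Finset.sum_mul_sq_le_sq_mul_sq Finset.univ
      (fun Y : Fin N → 𝒳 => Real.sqrt (∏ i, q i (Y i)))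
      (fun Y => Real.sqrt (∏ i, q i (Y i)) * |∑ i, h i (Y i)|)
    simp only [← mul_assoc, Real.mul_self_sqrt (hp _), Real.sq_sqrt (hp _), mul_pow, sq_abs,
      prod_simplex_sum hq, one_mul] at h2
    exact h2
  apply le_of_sq_le_sq _ (by positivity)
  calc _ ≤ _ := cs.trans hsq
    _ = _ := by rw [mul_pow _ (Real.sqrt N), Real.sq_sqrt (by positivity)]; ring

lemma nbhd_mem [Fintype 𝒳] {W : ℝ → ℝ → ℝ} (hW : IsGraphon W) {ν : ℝ → 𝒳 → ℝ}
    (hνm : ∀ x, Measurable fun β => ν β x) (hν : ∀ β ∈ Set.Ioc (0:ℝ) 1, ν β ∈ simplex 𝒳) (α : ℝ) :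
    nbhd W ν α ∈ subProb 𝒳 := by
  have hWm : Measurable (W α) := hW.1.comp (measurable_const.prodMk measurable_id)
  constructor
  · intro x
    apply setIntegral_nonneg measurableSet_Ioc
    intro β hβ
    exact mul_nonneg (hW.2.2 α β).1 ((hν β hβ).1 x)
  · unfold nbhd
    have hle : ∀ x, ∀ β ∈ Set.Ioc (0:ℝ) 1, ν β x ≤ 1 := by
      intro x β hβ
      rw [← (hν β hβ).2]
      exact Finset.single_le_sum (fun y _ => (hν β hβ).1 y) (Finset.mem_univ x)
    have hint : ∀ x, IntegrableOn (fun β => W α β * ν β x) (Set.Ioc (0:ℝ) 1) := by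
      intro x
      apply intOn01 (c := 1) (hWm.mul (hνm x))
      intro β hβ
      rw [Pi.mul_apply, abs_of_nonneg (mul_nonneg (hW.2.2 α β).1 ((hν β hβ).1 x))]
      exact mul_le_one₀ (hW.2.2 α β).2 ((hν β hβ).1 x) (hle x β hβ)
    rw [← integral_finsetSum _ (fun x _ => hint x)]
    calc _ ≤ ∫ β in Set.Ioc (0:ℝ) 1, (1:ℝ) := by
          apply setIntegral_mono_on (integrable_finsetSum _ (fun x _ => hint x)) _
            measurableSet_Ioc
          · intro β hβ
            rw [← Finset.mul_sum, (hν β hβ).2, mul_one]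
            exact (hW.2.2 α β).2
          · simp
      _ = 1 := by simp

lemma measurable_param {F : ℝ → ℝ → ℝ} (hF : Measurable (Function.uncurry F)) (s : Set ℝ) :
    Measurable fun α => ∫ β in s, F α β :=
  (StronglyMeasurable.integral_prod_right (ν := volume.restrict s)
    hF.stronglyMeasurable).measurable

lemma nbhd_measurable [Fintype 𝒳] {W : ℝ → ℝ → ℝ} (hW : IsGraphon W) {ν : ℝ → 𝒳 → ℝ}
    (hνm : ∀ x, Measurable fun β => ν β x) :
    Measurable (nbhd W ν) := by
  apply measurable_pi_lambda
  intro x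
  apply measurable_param
  exact hW.1.mul ((hνm x).comp measurable_snd)

lemma empNbhd_mem [Fintype 𝒳] [DecidableEq 𝒳] {N : ℕ} {ξ : Fin N → Fin N → ℝ}
    (hξ : IsEdgeWeights ξ) (X : Fin N → 𝒳) (i : Fin N) : empNbhd ξ X i ∈ subProb 𝒳 := by
  have hN : (0:ℝ) < N := by exact_mod_cast i.pos
  have h0 : ∀ j, 0 ≤ ξ i j := fun j => by rcases hξ.1 i j with h | h <;> simp [h]
  have h1 : ∀ j, ξ i j ≤ 1 := fun j => by rcases hξ.1 i j with h | h <;> simp [h]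
  constructor
  · intro x
    unfold empNbhd
    apply mul_nonneg (by positivity)
    apply Finset.sum_nonneg
    intro j _
    apply mul_nonneg (h0 j)
    split_ifs <;> simp
  · unfold empNbhd
    rw [← Finset.mul_sum, Finset.sum_comm]
    simp only [← Finset.mul_sum, Finset.sum_ite_eq, Finset.mem_univ, if_true, mul_one]
    rw [inv_mul_le_iff₀ hN, mul_one]
    calc ∑ j, ξ i j ≤ ∑ j : Fin N, (1:ℝ) := Finset.sum_le_sum fun j _ => h1 j
      _ = N := by simp

/-- Indicator of a cell. -/
noncomputable def ci (N : ℕ) (i : Fin N) (a : ℝ) : ℝ :=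
  if ((i : ℕ) : ℝ) / N < a ∧ a ≤ (((i : ℕ) : ℝ) + 1) / N then 1 else 0

lemma ci_eq_indicator (N : ℕ) (i : Fin N) : ci N i = (cell N i).indicator (fun _ => 1) := by
  ext a
  simp [ci, cell, Set.indicator_apply]

lemma measurable_ci (N : ℕ) (i : Fin N) : Measurable (ci N i) := by
  rw [ci_eq_indicator]
  exact measurable_const.indicator (measurableSet_cell N i)

lemma ci_mul (N : ℕ) (i : Fin N) (h : ℝ → ℝ) (a : ℝ) :
    ci N i a * h a = (cell N i).indicator h a := by
  classical
  rw [ci_eq_indicator, Set.indicator_apply, Set.indicator_apply]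
  split_ifs <;> simp

lemma ci_of_mem {N : ℕ} {i : Fin N} {a : ℝ} (h : a ∈ cell N i) (j : Fin N) :
    ci N j a = if j = i then 1 else 0 := by
  classical
  rw [ci_eq_indicator, Set.indicator_apply]
  by_cases hj : j = i
  · subst hj; simp [h]
  · rw [if_neg, if_neg hj]
    intro h'
    exact hj (cell_unique h' h)

lemma stepGraphon_eq {N : ℕ} (ξ : Fin N → Fin N → ℝ) :
    stepGraphon ξ = fun a b => ∑ i, ∑ j, ci N i a * ci N j b * ξ i j := rfl

lemma stepGraphon_measurable {N : ℕ} (ξ : Fin N → Fin N → ℝ) :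
    Measurable (Function.uncurry (stepGraphon ξ)) := by
  rw [stepGraphon_eq]
  apply Finset.measurable_sum
  intro i _
  apply Finset.measurable_sum
  intro j _
  exact (((measurable_ci N i).comp measurable_fst).mul
    ((measurable_ci N j).comp measurable_snd)).mul_const _

lemma stepGraphon_of_mem {N : ℕ} (ξ : Fin N → Fin N → ℝ) {i : Fin N} {a : ℝ}
    (h : a ∈ cell N i) (b : ℝ) : stepGraphon ξ a b = ∑ j, ci N j b * ξ i j := by
  rw [stepGraphon_eq]
  simp only [ci_of_mem h]
  rw [Finset.sum_eq_single i]
  · simp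
  · intro k _ hk; simp [hk]
  · simp

lemma integral_ci_mul {N : ℕ} (i : Fin N) (h : ℝ → ℝ) :
    ∫ β in Set.Ioc (0:ℝ) 1, ci N i β * h β = ∫ β in cell N i, h β := by
  simp only [ci_mul]
  rw [setIntegral_indicator (measurableSet_cell N i), Set.inter_eq_self_of_subset_right
    (cell_subset i)]

/-- The step function `β ↦ 1{X^{⌈Nβ⌉} = x}`. -/
noncomputable def gX [DecidableEq 𝒳] {N : ℕ} (X : Fin N → 𝒳) (x : 𝒳) (β : ℝ) : ℝ :=
  ∑ j, ci N j β * (if X j = x then 1 else 0)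

lemma gX_measurable [DecidableEq 𝒳] {N : ℕ} (X : Fin N → 𝒳) (x : 𝒳) : Measurable (gX X x) := by
  unfold gX
  apply Finset.measurable_sum
  intro j _
  exact (measurable_ci N j).mul_const _

lemma gX_of_mem [DecidableEq 𝒳] {N : ℕ} (X : Fin N → 𝒳) (x : 𝒳) {i : Fin N} {β : ℝ}
    (h : β ∈ cell N i) : gX X x β = if X i = x then 1 else 0 := by
  unfold gX
  simp only [ci_of_mem h, ite_mul, one_mul, zero_mul, Finset.sum_ite_eq', Finset.mem_univ, if_true]

lemma gX_of_not_mem [DecidableEq 𝒳] {N : ℕ} (X : Fin N → 𝒳) (x : 𝒳) {β : ℝ}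
    (h : ∀ i, β ∉ cell N i) : gX X x β = 0 := by
  unfold gX
  apply Finset.sum_eq_zero
  intro i _
  rw [ci_eq_indicator, Set.indicator_of_notMem (h i), zero_mul]

lemma gX_bound [DecidableEq 𝒳] {N : ℕ} (X : Fin N → 𝒳) (x : 𝒳) (β : ℝ) : |gX X x β| ≤ 1 := by
  by_cases h : ∃ i, β ∈ cell N i
  · obtain ⟨i, hi⟩ := h
    rw [gX_of_mem X x hi]
    split_ifs <;> simp
  · push Not at h
    rw [gX_of_not_mem X x h]; simp

lemma stepGraphon_bound {N : ℕ} {ξ : Fin N → Fin N → ℝ} (hξ : IsEdgeWeights ξ) (a b : ℝ) :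
    |stepGraphon ξ a b| ≤ 1 := by
  by_cases h : ∃ i, a ∈ cell N i
  · obtain ⟨i, hi⟩ := h
    rw [stepGraphon_of_mem ξ hi]
    by_cases h' : ∃ j, b ∈ cell N j
    · obtain ⟨j, hj⟩ := h'
      simp only [ci_of_mem hj]
      rcases hξ.1 i j with h | h <;> simp [h]
    · push Not at h'
      rw [Finset.sum_eq_zero]
      · simp
      · intro j _
        rw [ci_eq_indicator, Set.indicator_of_notMem (h' j), zero_mul]
  · push Not at h
    rw [stepGraphon_eq]
    simp only
    rw [Finset.sum_eq_zero]
    · simp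
    · intro i _
      rw [Finset.sum_eq_zero]
      intro j _
      rw [ci_eq_indicator, Set.indicator_of_notMem (h i)]
      ring

/-- The test function `(x', β) ↦ W(α,β) 1{x' = x}`. -/
noncomputable def tf [DecidableEq 𝒳] (W : ℝ → ℝ → ℝ) (x : 𝒳) (α : ℝ) : 𝒳 → ℝ → ℝ :=
  fun x' β => W α β * (if x' = x then 1 else 0)

lemma empInt_tf [Fintype 𝒳] [DecidableEq 𝒳] {W : ℝ → ℝ → ℝ} (hW : IsGraphon W) {N : ℕ}
    (X : Fin N → 𝒳) (x : 𝒳) (α : ℝ) :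
    empInt (tf W x α) X = ∫ β in Set.Ioc (0:ℝ) 1, W α β * gX X x β := by
  have hWm : Measurable (W α) := hW.1.comp (measurable_const.prodMk measurable_id)
  have e : ∀ β, W α β * gX X x β = ∑ j, ci N j β * (W α β * (if X j = x then 1 else 0)) := by
    intro β
    unfold gX
    rw [Finset.mul_sum]
    apply Finset.sum_congr rfl
    intro j _; ring
  simp only [e]
  rw [integral_finsetSum]
  · unfold empInt tf
    apply Finset.sum_congr rfl
    intro j _
    rw [integral_ci_mul j (fun β => W α β * (if X j = x then 1 else 0))]
    rfl
  · intro j _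
    apply intOn01 (c := 1) ((measurable_ci N j).mul (hWm.mul_const _))
    intro β _
    have h1 : |ci N j β| ≤ 1 := by unfold ci; split_ifs <;> simp
    have h2 : |W α β| ≤ 1 := by rw [abs_of_nonneg (hW.2.2 α β).1]; exact (hW.2.2 α β).2
    have h3 : |(if X j = x then (1:ℝ) else 0)| ≤ 1 := by split_ifs <;> simp
    rw [Pi.mul_apply, abs_mul, abs_mul]
    exact mul_le_one₀ h1 (by positivity) (mul_le_one₀ h2 (by positivity) h3)

lemma mfInt_tf [Fintype 𝒳] [DecidableEq 𝒳] (W : ℝ → ℝ → ℝ) (ν : ℝ → 𝒳 → ℝ) (x : 𝒳) (α : ℝ) :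
    mfInt (tf W x α) ν = nbhd W ν α x := by
  unfold mfInt tf nbhd
  simp

lemma empNbhd_eq [Fintype 𝒳] [DecidableEq 𝒳] {N : ℕ} (ξ : Fin N → Fin N → ℝ)
    (X : Fin N → 𝒳) (x : 𝒳) {i : Fin N} {α : ℝ} (hα : α ∈ cell N i) :
    empNbhd ξ X i x = ∫ β in Set.Ioc (0:ℝ) 1, stepGraphon ξ α β * gX X x β := by
  have e : ∀ β, stepGraphon ξ α β * gX X x β =
      ∑ j, ci N j β * (ξ i j * (if X j = x then 1 else 0)) := by
    intro β
    rw [stepGraphon_of_mem ξ hα]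
    by_cases h' : ∃ j, β ∈ cell N j
    · obtain ⟨j, hj⟩ := h'
      rw [gX_of_mem X x hj]
      simp only [ci_of_mem hj, ite_mul, one_mul, zero_mul, Finset.sum_ite_eq', Finset.mem_univ,
        if_true]
    · push Not at h'
      rw [gX_of_not_mem X x h', Finset.sum_eq_zero (s := Finset.univ), zero_mul,
        Finset.sum_eq_zero]
      all_goals
        intro j _
        rw [ci_eq_indicator, Set.indicator_of_notMem (h' j), zero_mul]
  simp only [e]
  rw [integral_finsetSum]
  · unfold empNbhd
    rw [Finset.mul_sum]
    apply Finset.sum_congr rfl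
    intro j _
    rw [integral_ci_mul j (fun β => ξ i j * (if X j = x then 1 else 0)), setIntegral_const,
      volume_cell, smul_eq_mul]
  · intro j _
    apply Integrable.mul_const
    apply intOn01 (c := 1) (measurable_ci N j)
    intro β _
    unfold ci; split_ifs <;> simp

/-- Key decomposition of the neighbourhood error. -/
lemma nbhd_diff [Fintype 𝒳] [DecidableEq 𝒳] {W : ℝ → ℝ → ℝ} (hW : IsGraphon W) {N : ℕ}
    {ξ : Fin N → Fin N → ℝ} (hξ : IsEdgeWeights ξ) (ν : ℝ → 𝒳 → ℝ)
    (X : Fin N → 𝒳) (x : 𝒳) {i : Fin N} {α : ℝ} (hα : α ∈ cell N i) :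
    |empNbhd ξ X i x - nbhd W ν α x| ≤
      |∫ β in Set.Ioc (0:ℝ) 1, (stepGraphon ξ α β - W α β) * gX X x β| +
      |empInt (tf W x α) X - mfInt (tf W x α) ν| := by
  have hWm : Measurable (W α) := hW.1.comp (measurable_const.prodMk measurable_id)
  have hSm : Measurable (stepGraphon ξ α) :=
    (stepGraphon_measurable ξ).comp (measurable_const.prodMk measurable_id)
  have e : empNbhd ξ X i x - nbhd W ν α x =
      (∫ β in Set.Ioc (0:ℝ) 1, (stepGraphon ξ α β - W α β) * gX X x β) +
      (empInt (tf W x α) X - mfInt (tf W x α) ν) := by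
    rw [empNbhd_eq ξ X x hα, mfInt_tf, empInt_tf hW]
    simp only [sub_mul]
    rw [integral_sub]
    · ring
    · apply intOn01 (c := 1) (hSm.mul (gX_measurable X x))
      intro β _
      rw [Pi.mul_apply, abs_mul]
      exact mul_le_one₀ (stepGraphon_bound hξ α β) (by positivity) (gX_bound X x β)
    · apply intOn01 (c := 1) (hWm.mul (gX_measurable X x))
      intro β _
      rw [Pi.mul_apply, abs_mul]
      exact mul_le_one₀ (by rw [abs_of_nonneg (hW.2.2 α β).1]; exact (hW.2.2 α β).2)
        (by positivity) (gX_bound X x β)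
  rw [e]
  exact abs_add_le _ _

lemma abs_sum_sub_le [Fintype 𝒳] {a b g : 𝒳 → ℝ} {M : ℝ} (hg : ∀ x, |g x| ≤ M) :
    |∑ x, a x * g x - ∑ x, b x * g x| ≤ M * ∑ x, |a x - b x| := by
  rw [← Finset.sum_sub_distrib, Finset.mul_sum]
  refine (Finset.abs_sum_le_sum_abs _ _).trans (Finset.sum_le_sum fun x _ => ?_)
  rw [← sub_mul, abs_mul, mul_comm]
  exact mul_le_mul_of_nonneg_right (hg x) (abs_nonneg _)

/-- The pulled back test function. -/
noncomputable def ftil [Fintype 𝒳] (K : 𝒳 → (𝒳 → ℝ) → 𝒳 → ℝ) (G : ℝ → 𝒳 → ℝ) (f : 𝒳 → ℝ → ℝ) :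
    𝒳 → ℝ → ℝ := fun x α => ∑ x', K x (G α) x' * f x' α

lemma kernel_comp_measurable [Fintype 𝒳] {K : 𝒳 → (𝒳 → ℝ) → 𝒳 → ℝ} {L : ℝ}
    (hL : ∀ x ν ν', ν ∈ subProb 𝒳 → ν' ∈ subProb 𝒳 →
      l1dist (K x ν) (K x ν') ≤ L * l1dist ν ν')
    {G : ℝ → 𝒳 → ℝ} (hG : Measurable G) (hGm : ∀ α, G α ∈ subProb 𝒳) (x x' : 𝒳) :
    Measurable fun α => K x (G α) x' := by
  have hc : Continuous fun ν : subProb 𝒳 => K x ν x' := by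
    rw [continuous_iff_continuousAt]
    intro ν
    rw [ContinuousAt, tendsto_iff_dist_tendsto_zero]
    have hz : Tendsto (fun ν' : subProb 𝒳 => L * l1dist (ν' : 𝒳 → ℝ) ν) (nhds ν) (nhds 0) := by
      have : Continuous fun ν' : subProb 𝒳 => L * l1dist (ν' : 𝒳 → ℝ) ν := by
        unfold l1dist
        refine continuous_const.mul (continuous_finsetSum _ fun y _ => ?_)
        exact (((continuous_apply y).comp continuous_subtype_val).sub continuous_const).abs
      have h := this.tendsto ν
      simpa [l1dist] using h
    refine squeeze_zero (fun _ => dist_nonneg) (fun ν' => ?_) hz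
    rw [Real.dist_eq]
    refine le_trans ?_ (hL x ν' ν ν'.2 ν.2)
    exact Finset.single_le_sum (f := fun y => |K x ν' y - K x ν y|) (fun _ _ => abs_nonneg _)
      (Finset.mem_univ x')
  exact hc.measurable.comp (hG.subtype_mk (h := hGm))

lemma ftil_measurable [Fintype 𝒳] {K : 𝒳 → (𝒳 → ℝ) → 𝒳 → ℝ} {L : ℝ}
    (hL : ∀ x ν ν', ν ∈ subProb 𝒳 → ν' ∈ subProb 𝒳 →
      l1dist (K x ν) (K x ν') ≤ L * l1dist ν ν')
    {G : ℝ → 𝒳 → ℝ} (hG : Measurable G) (hGm : ∀ α, G α ∈ subProb 𝒳)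
    {f : 𝒳 → ℝ → ℝ} (hf : ∀ x, Measurable (f x)) (x : 𝒳) : Measurable (ftil K G f x) := by
  unfold ftil
  exact Finset.measurable_sum _ fun x' _ => (kernel_comp_measurable hL hG hGm x x').mul (hf x')

lemma sub_bound [Fintype 𝒳] {p : 𝒳 → ℝ} (hp : p ∈ subProb 𝒳) (x : 𝒳) : |p x| ≤ 1 := by
  rw [abs_of_nonneg (hp.1 x)]
  exact (Finset.single_le_sum (fun y _ => hp.1 y) (Finset.mem_univ x)).trans hp.2

lemma simplex_sub [Fintype 𝒳] {p : 𝒳 → ℝ} (hp : p ∈ simplex 𝒳) : p ∈ subProb 𝒳 :=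
  ⟨hp.1, hp.2.le⟩

lemma err_measurable [Fintype 𝒳] [DecidableEq 𝒳] {W : ℝ → ℝ → ℝ} (hW : IsGraphon W) {N : ℕ}
    {ν : ℝ → 𝒳 → ℝ} (hνm : ∀ x, Measurable fun β => ν β x) (X : Fin N → 𝒳) (x : 𝒳) :
    Measurable fun α => |empInt (tf W x α) X - mfInt (tf W x α) ν| := by
  simp only [empInt_tf hW, mfInt_tf]
  have h1 : Measurable fun α => ∫ β in Set.Ioc (0:ℝ) 1, W α β * gX X x β :=
    measurable_param (F := fun α β => W α β * gX X x β)
      (hW.1.mul ((gX_measurable X x).comp measurable_snd)) _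
  have h2 : Measurable fun α => nbhd W ν α x := (measurable_pi_apply x).comp (nbhd_measurable hW hνm)
  exact (h1.sub h2).abs

lemma int01_bound {h : ℝ → ℝ} {c : ℝ} (hb : ∀ α, |h α| ≤ c) :
    |∫ α in Set.Ioc (0:ℝ) 1, h α| ≤ c := by
  have := norm_setIntegral_le_of_norm_le_const (μ := volume) (s := Set.Ioc (0:ℝ) 1) (f := h)
    (C := c) (by simp) (fun x _ => hb x)
  simpa using this

lemma err_bound [Fintype 𝒳] [DecidableEq 𝒳] {W : ℝ → ℝ → ℝ} (hW : IsGraphon W) {N : ℕ}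
    {ν : ℝ → 𝒳 → ℝ} (hνm : ∀ x, Measurable fun β => ν β x)
    (hν : ∀ β ∈ Set.Ioc (0:ℝ) 1, ν β ∈ simplex 𝒳) (X : Fin N → 𝒳) (x : 𝒳) (α : ℝ) :
    |empInt (tf W x α) X - mfInt (tf W x α) ν| ≤ 2 := by
  rw [empInt_tf hW, mfInt_tf]
  have h1 : |∫ β in Set.Ioc (0:ℝ) 1, W α β * gX X x β| ≤ 1 := by
    apply int01_bound
    intro β
    rw [abs_mul]
    exact mul_le_one₀ (by rw [abs_of_nonneg (hW.2.2 α β).1]; exact (hW.2.2 α β).2)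
        (by positivity) (gX_bound X x β)
  have h2 := sub_bound (nbhd_mem hW hνm hν α) x
  refine (abs_sub _ _).trans ?_
  linarith

lemma err_int [Fintype 𝒳] [DecidableEq 𝒳] {W : ℝ → ℝ → ℝ} (hW : IsGraphon W) {N : ℕ}
    {ν : ℝ → 𝒳 → ℝ} (hνm : ∀ x, Measurable fun β => ν β x)
    (hν : ∀ β ∈ Set.Ioc (0:ℝ) 1, ν β ∈ simplex 𝒳) (X : Fin N → 𝒳) (x : 𝒳) :
    IntegrableOn (fun α => |empInt (tf W x α) X - mfInt (tf W x α) ν|) (Set.Ioc (0:ℝ) 1) :=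
  intOn01 (c := 2) (err_measurable hW hνm X x) fun α _ => by
    rw [abs_abs]; exact err_bound hW hνm hν X x α

lemma step_det [Fintype 𝒳] [DecidableEq 𝒳] {K : 𝒳 → (𝒳 → ℝ) → 𝒳 → ℝ} {L : ℝ} (hL0 : 0 ≤ L)
    (hK : ∀ x ν, ν ∈ subProb 𝒳 → K x ν ∈ simplex 𝒳)
    (hL : ∀ x ν ν', ν ∈ subProb 𝒳 → ν' ∈ subProb 𝒳 →
      l1dist (K x ν) (K x ν') ≤ L * l1dist ν ν')
    {W : ℝ → ℝ → ℝ} (hW : IsGraphon W) {N : ℕ} (hN : 1 ≤ N)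
    {ξ : Fin N → Fin N → ℝ} (hξ : IsEdgeWeights ξ) {w : ℝ}
    (hw : ∀ g : ℝ → ℝ, Measurable g → (∀ β, |g β| ≤ 1) →
      (∫ α in Set.Ioc (0:ℝ) 1, |∫ β in Set.Ioc (0:ℝ) 1, (stepGraphon ξ α β - W α β) * g β|) ≤ w)
    {ν : ℝ → 𝒳 → ℝ} (hνm : ∀ x, Measurable fun β => ν β x)
    (hν : ∀ β ∈ Set.Ioc (0:ℝ) 1, ν β ∈ simplex 𝒳)
    {M : ℝ} (hM : 0 ≤ M) {f : 𝒳 → ℝ → ℝ} (hf : ∀ x, Measurable (f x)) (hfb : ∀ x α, |f x α| ≤ M)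
    (X : Fin N → 𝒳) :
    |∑ i, ∑ x', K (X i) (empNbhd ξ X i) x' * (∫ α in cell N i, f x' α)
      - empInt (ftil K (nbhd W ν) f) X| ≤
    M * L * ∑ x, (w + ∫ α in Set.Ioc (0:ℝ) 1, |empInt (tf W x α) X - mfInt (tf W x α) ν|) := by
  have hGm := nbhd_measurable hW hνm
  have hGs := nbhd_mem hW hνm hν
  have hftm := ftil_measurable hL hGm hGs hf
  have hftb : ∀ x α, |ftil K (nbhd W ν) f x α| ≤ M := fun x α =>
    abs_avg_le (hK x _ (hGs α)) (fun x' => hfb x' α)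
  set D : 𝒳 → ℝ → ℝ := fun x α =>
      |∫ β in Set.Ioc (0:ℝ) 1, (stepGraphon ξ α β - W α β) * gX X x β| +
      |empInt (tf W x α) X - mfInt (tf W x α) ν| with hD
  have hopm : ∀ x, Measurable fun α =>
      |∫ β in Set.Ioc (0:ℝ) 1, (stepGraphon ξ α β - W α β) * gX X x β| := by
    intro x
    exact (measurable_param (F := fun α β => (stepGraphon ξ α β - W α β) * gX X x β)
      (((stepGraphon_measurable ξ).sub hW.1).mul ((gX_measurable X x).comp measurable_snd)) _).abs
  have hopi : ∀ x, IntegrableOn (fun α =>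
      |∫ β in Set.Ioc (0:ℝ) 1, (stepGraphon ξ α β - W α β) * gX X x β|) (Set.Ioc (0:ℝ) 1) := by
    intro x
    apply intOn01 (c := 2) (hopm x)
    intro α _
    rw [abs_abs]
    apply int01_bound
    intro β
    rw [abs_mul]
    have h1 := stepGraphon_bound hξ α β
    have h2 : |W α β| ≤ 1 := by rw [abs_of_nonneg (hW.2.2 α β).1]; exact (hW.2.2 α β).2
    have h3 := abs_sub (stepGraphon ξ α β) (W α β)
    have h4 := gX_bound X x β
    calc _ ≤ 2 * (1:ℝ) := by gcongr; linarith
      _ = 2 := by norm_num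
  have hDi : ∀ x, IntegrableOn (D x) (Set.Ioc (0:ℝ) 1) := fun x =>
    (hopi x).add (err_int hW hνm hν X x)
  have hcell : ∀ i : Fin N, |∑ x', K (X i) (empNbhd ξ X i) x' * (∫ α in cell N i, f x' α) -
      ∫ α in cell N i, ftil K (nbhd W ν) f (X i) α| ≤ ∫ α in cell N i, M * L * ∑ x, D x α := by
    intro i
    have hfi : ∀ x', IntegrableOn (f x') (cell N i) := fun x' =>
      intOnCell i (hf x') (fun α _ => hfb x' α)
    have hfti : IntegrableOn (ftil K (nbhd W ν) f (X i)) (cell N i) :=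
      intOnCell i (hftm (X i)) (fun α _ => hftb (X i) α)
    simp only [← integral_const_mul]
    rw [← integral_finsetSum _ (fun x' _ => (hfi x').const_mul _),
      ← integral_sub (integrable_finsetSum _ (fun x' _ => (hfi x').const_mul _)) hfti]
    refine (abs_integral_le_integral_abs).trans ?_
    apply setIntegral_mono_on
    · exact ((integrable_finsetSum _ (fun x' _ => (hfi x').const_mul _)).sub hfti).abs
    · exact (integrable_finsetSum _ fun x _ => (hDi x).mono_set (cell_subset i)).const_mul _
    · exact measurableSet_cell N i
    · intro α hα
      refine (abs_sum_sub_le (fun x' => hfb x' α)).trans ?_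
      rw [mul_assoc]
      apply mul_le_mul_of_nonneg_left _ hM
      refine (hL (X i) _ _ (empNbhd_mem hξ X i) (hGs α)).trans ?_
      apply mul_le_mul_of_nonneg_left _ hL0
      exact Finset.sum_le_sum fun x _ => nbhd_diff hW hξ ν X x hα
  have hsumD : IntegrableOn (fun α => M * L * ∑ x, D x α) (Set.Ioc (0:ℝ) 1) :=
    (integrable_finsetSum _ fun x _ => hDi x).const_mul _
  calc _ = |∑ i : Fin N, (∑ x', K (X i) (empNbhd ξ X i) x' * (∫ α in cell N i, f x' α) -
      ∫ α in cell N i, ftil K (nbhd W ν) f (X i) α)| := by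
        rw [Finset.sum_sub_distrib]; rfl
    _ ≤ ∑ i : Fin N, ∫ α in cell N i, M * L * ∑ x, D x α :=
        (Finset.abs_sum_le_sum_abs _ _).trans (Finset.sum_le_sum fun i _ => hcell i)
    _ = M * L * ∑ x, ∫ α in Set.Ioc (0:ℝ) 1, D x α := by
        rw [sum_cells hN hsumD, integral_const_mul, integral_finsetSum _ (fun x _ => hDi x)]
    _ ≤ _ := by
        apply mul_le_mul_of_nonneg_left _ (by positivity)
        apply Finset.sum_le_sum
        intro x _
        simp only [hD]
        rw [integral_add (hopi x) (err_int hW hνm hν X x)]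
        have := hw (gX X x) (gX_measurable X x) (gX_bound X x)
        linarith

lemma mf_simplex [Fintype 𝒳] {μ0 : 𝒳 → ℝ} (hμ0 : μ0 ∈ simplex 𝒳)
    {K : 𝒳 → (𝒳 → ℝ) → 𝒳 → ℝ} (hK : ∀ x ν, ν ∈ subProb 𝒳 → K x ν ∈ simplex 𝒳)
    {W : ℝ → ℝ → ℝ} (hW : IsGraphon W) {μ : ℕ → ℝ → 𝒳 → ℝ}
    (hm : ∀ t x, Measurable fun α => μ t α x)
    (h0 : ∀ α ∈ Set.Icc (0:ℝ) 1, μ 0 α = μ0)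
    (hs : ∀ t : ℕ, ∀ α ∈ Set.Icc (0:ℝ) 1, ∀ x' : 𝒳,
      μ (t+1) α x' = ∑ x, μ t α x * K x (nbhd W (μ t) α) x') (t : ℕ) :
    ∀ α ∈ Set.Icc (0:ℝ) 1, μ t α ∈ simplex 𝒳 := by
  induction t with
  | zero => intro α hα; rw [h0 α hα]; exact hμ0
  | succ t ih =>
    intro α hα
    have hG : nbhd W (μ t) α ∈ subProb 𝒳 :=
      nbhd_mem hW (hm t) (fun β hβ => ih β (Set.Ioc_subset_Icc_self hβ)) α
    constructor
    · intro x'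
      rw [hs t α hα x']
      exact Finset.sum_nonneg fun x _ => mul_nonneg ((ih α hα).1 x) ((hK x _ hG).1 x')
    · simp only [hs t α hα]
      rw [Finset.sum_comm]
      simp only [← Finset.mul_sum, (hK _ _ hG).2, mul_one]
      exact (ih α hα).2

lemma main_bound [Fintype 𝒳] [DecidableEq 𝒳] {μ0 : 𝒳 → ℝ} (hμ0 : μ0 ∈ simplex 𝒳)
    {K : 𝒳 → (𝒳 → ℝ) → 𝒳 → ℝ} {L : ℝ} (hL0 : 0 ≤ L)
    (hK : ∀ x ν, ν ∈ subProb 𝒳 → K x ν ∈ simplex 𝒳)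
    (hL : ∀ x ν ν', ν ∈ subProb 𝒳 → ν' ∈ subProb 𝒳 →
      l1dist (K x ν) (K x ν') ≤ L * l1dist ν ν')
    {W : ℝ → ℝ → ℝ} (hW : IsGraphon W) {μ : ℕ → ℝ → 𝒳 → ℝ}
    (hm : ∀ t x, Measurable fun α => μ t α x)
    (h0 : ∀ α ∈ Set.Icc (0:ℝ) 1, μ 0 α = μ0)
    (hs : ∀ t : ℕ, ∀ α ∈ Set.Icc (0:ℝ) 1, ∀ x' : 𝒳,
      μ (t+1) α x' = ∑ x, μ t α x * K x (nbhd W (μ t) α) x')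
    (J : {N : ℕ} → (Fin N → Fin N → ℝ) → ℕ → (Fin N → 𝒳) → ℝ)
    (hJ0 : ∀ {N : ℕ} (ξ : Fin N → Fin N → ℝ) (X : Fin N → 𝒳), J ξ 0 X = ∏ i, μ0 (X i))
    (hJs : ∀ {N : ℕ} (ξ : Fin N → Fin N → ℝ) (t : ℕ) (Y : Fin N → 𝒳),
      J ξ (t+1) Y = ∑ X : Fin N → 𝒳, J ξ t X * ∏ i, K (X i) (empNbhd ξ X i) (Y i))
    (t : ℕ) :
    ∃ C : ℝ, 0 ≤ C ∧ ∀ N : ℕ, 1 ≤ N → ∀ ξ : Fin N → Fin N → ℝ, IsEdgeWeights ξ →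
      ∀ w : ℝ, 0 ≤ w →
      (∀ g : ℝ → ℝ, Measurable g → (∀ β, |g β| ≤ 1) →
        (∫ α in Set.Ioc (0:ℝ) 1,
          |∫ β in Set.Ioc (0:ℝ) 1, (stepGraphon ξ α β - W α β) * g β|) ≤ w) →
      ∀ M : ℝ, 0 ≤ M → ∀ f : 𝒳 → ℝ → ℝ, (∀ x, Measurable (f x)) → (∀ x α, |f x α| ≤ M) →
      ∑ X : Fin N → 𝒳, J ξ t X * |empInt f X - mfInt f (μ t)| ≤
        M * C * (1 / Real.sqrt N + w) := by
  -- the law is a probability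
  have hJnn : ∀ {N : ℕ} (ξ : Fin N → Fin N → ℝ), IsEdgeWeights ξ → ∀ t (X : Fin N → 𝒳),
      0 ≤ J ξ t X := by
    intro N ξ hξ t
    induction t with
    | zero => intro X; rw [hJ0]; exact Finset.prod_nonneg fun i _ => hμ0.1 _
    | succ t ih =>
      intro X
      rw [hJs]
      exact Finset.sum_nonneg fun Z _ => mul_nonneg (ih Z)
        (Finset.prod_nonneg fun i _ => (hK _ _ (empNbhd_mem hξ Z i)).1 _)
  have hJ1 : ∀ {N : ℕ} (ξ : Fin N → Fin N → ℝ), IsEdgeWeights ξ → ∀ t,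
      ∑ X : Fin N → 𝒳, J ξ t X = 1 := by
    intro N ξ hξ t
    induction t with
    | zero => simp only [hJ0]; exact prod_simplex_sum (q := fun _ => μ0) fun _ => hμ0
    | succ t ih =>
      simp only [hJs]
      rw [Finset.sum_comm, ← ih]
      apply Finset.sum_congr rfl
      intro X _
      rw [← Finset.mul_sum, prod_simplex_sum (q := fun i => K (X i) (empNbhd ξ X i))
        (fun i => hK _ _ (empNbhd_mem hξ X i)), mul_one]
  -- law of large numbers for one step
  have hlln : ∀ N : ℕ, 1 ≤ N → ∀ q : Fin N → 𝒳 → ℝ, (∀ i, q i ∈ simplex 𝒳) →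
      ∀ M : ℝ, 0 ≤ M → ∀ f : 𝒳 → ℝ → ℝ, (∀ x α, |f x α| ≤ M) →
      ∑ Y : Fin N → 𝒳, (∏ i, q i (Y i)) *
        |empInt f Y - ∑ i, ∑ x, q i x * ∫ α in cell N i, f x α| ≤ 2 * M * (1 / Real.sqrt N) := by
    intro N hN q hq M hM f hfb
    have hN' : (0:ℝ) < N := by exact_mod_cast hN
    refine (wlln hq (g := fun i x => ∫ α in cell N i, f x α) (c := M / N) (by positivity)
      (fun i x => cell_int_bound i (hfb x))).trans (le_of_eq ?_)
    have hsq : Real.sqrt N ≠ 0 := (Real.sqrt_pos.2 hN').ne'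
    have := Real.mul_self_sqrt hN'.le
    field_simp
    nlinarith
  induction t with
  | zero =>
    refine ⟨2, by norm_num, ?_⟩
    intro N hN ξ hξ w hw0 _ M hM f hf hfb
    have hmean : ∑ i : Fin N, ∑ x, μ0 x * ∫ α in cell N i, f x α = mfInt f (μ 0) := by
      have hfi : ∀ x, IntegrableOn (f x) (Set.Ioc (0:ℝ) 1) := fun x =>
        intOn01 (hf x) (fun α _ => hfb x α)
      rw [Finset.sum_comm]
      simp only [← Finset.mul_sum, sum_cells hN (hfi _)]
      unfold mfInt
      simp only [← integral_const_mul]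
      rw [← integral_finsetSum _ (fun x _ => (hfi x).const_mul _)]
      apply setIntegral_congr_fun measurableSet_Ioc
      intro α hα
      simp only [h0 α (Set.Ioc_subset_Icc_self hα)]
      exact Finset.sum_congr rfl fun x _ => mul_comm _ _
    have := hlln N hN (fun _ => μ0) (fun _ => hμ0) M hM f hfb
    rw [hmean] at this
    simp only [hJ0]
    refine this.trans ?_
    have h2 : 0 ≤ M * w := by positivity
    nlinarith
  | succ t ih =>
    obtain ⟨C, hC, ih⟩ := ih
    refine ⟨2 + C + L * (Fintype.card 𝒳 * (1 + C)), by positivity, ?_⟩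
    intro N hN ξ hξ w hw0 hw M hM f hf hfb
    have hνm := hm t
    have hν : ∀ β ∈ Set.Ioc (0:ℝ) 1, μ t β ∈ simplex 𝒳 := fun β hβ =>
      mf_simplex hμ0 hK hW hm h0 hs t β (Set.Ioc_subset_Icc_self hβ)
    have hGm := nbhd_measurable hW hνm
    have hGs := nbhd_mem hW hνm hν
    set ft := ftil K (nbhd W (μ t)) f with hft
    have hftm : ∀ x, Measurable (ft x) := ftil_measurable hL hGm hGs hf
    have hftb : ∀ x α, |ft x α| ≤ M := fun x α =>
      abs_avg_le (hK x _ (hGs α)) (fun x' => hfb x' α)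
    have hmf : mfInt f (μ (t+1)) = mfInt ft (μ t) := by
      unfold mfInt
      apply setIntegral_congr_fun measurableSet_Ioc
      intro α hα
      simp only [hs t α (Set.Ioc_subset_Icc_self hα), hft, ftil, Finset.mul_sum, Finset.sum_mul]
      rw [Finset.sum_comm]
      refine Finset.sum_congr rfl fun x _ => Finset.sum_congr rfl fun x' _ => ?_
      ring
    rw [hmf]
    set m := mfInt ft (μ t) with hmdef
    set r := 1 / Real.sqrt N + w with hr
    have hr0 : 0 ≤ 1 / Real.sqrt N := by positivity
    set E : 𝒳 → (Fin N → 𝒳) → ℝ := fun x X =>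
      ∫ α in Set.Ioc (0:ℝ) 1, |empInt (tf W x α) X - mfInt (tf W x α) (μ t)| with hE
    have hX : ∀ X : Fin N → 𝒳,
        ∑ Y : Fin N → 𝒳, (∏ i, K (X i) (empNbhd ξ X i) (Y i)) * |empInt f Y - m| ≤
          2 * M * (1 / Real.sqrt N) + (M * L * ∑ x, (w + E x X) + |empInt ft X - m|) := by
      intro X
      have hq : ∀ i, K (X i) (empNbhd ξ X i) ∈ simplex 𝒳 :=
        fun i => hK _ _ (empNbhd_mem hξ X i)
      have h1 := hlln N hN (fun i => K (X i) (empNbhd ξ X i)) hq M hM f hfb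
      have h2 := step_det hL0 hK hL hW hN hξ hw hνm hν hM hf hfb X
      set A := ∑ i, ∑ x', K (X i) (empNbhd ξ X i) x' * (∫ α in cell N i, f x' α) with hA
      have h3 : |A - m| ≤ M * L * ∑ x, (w + E x X) + |empInt ft X - m| :=
        (abs_sub_le A (empInt ft X) m).trans (by linarith)
      calc _ ≤ ∑ Y : Fin N → 𝒳, ((∏ i, K (X i) (empNbhd ξ X i) (Y i)) * |empInt f Y - A| +
            (∏ i, K (X i) (empNbhd ξ X i) (Y i)) * |A - m|) := by
            apply Finset.sum_le_sum
            intro Y _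
            rw [← mul_add]
            exact mul_le_mul_of_nonneg_left (abs_sub_le _ _ _)
              (Finset.prod_nonneg fun i _ => (hq i).1 _)
        _ = ∑ Y : Fin N → 𝒳, (∏ i, K (X i) (empNbhd ξ X i) (Y i)) * |empInt f Y - A| +
            |A - m| := by
            rw [Finset.sum_add_distrib, ← Finset.sum_mul,
              prod_simplex_sum (q := fun i => K (X i) (empNbhd ξ X i)) hq, one_mul]
        _ ≤ _ := add_le_add h1 h3
    have hEb : ∀ x, ∑ X : Fin N → 𝒳, J ξ t X * E x X ≤ C * r := by
      intro x
      simp only [hE, ← integral_const_mul]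
      rw [← integral_finsetSum _ (fun X _ => (err_int hW hνm hν X x).const_mul _)]
      calc _ ≤ ∫ α in Set.Ioc (0:ℝ) 1, C * r := by
            apply setIntegral_mono_on
            · exact integrable_finsetSum _ (fun X _ => (err_int hW hνm hν X x).const_mul _)
            · exact integrableOn_const (by simp)
            · exact measurableSet_Ioc
            · intro α _
              have hWm : Measurable (W α) := hW.1.comp (measurable_const.prodMk measurable_id)
              have := ih N hN ξ hξ w hw0 hw 1 zero_le_one (tf W x α)
                (fun x' => hWm.mul_const _) (fun x' β => by
                  unfold tf
                  rw [abs_mul]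
                  refine mul_le_one₀ ?_ (by positivity) (by split_ifs <;> simp)
                  rw [abs_of_nonneg (hW.2.2 α β).1]; exact (hW.2.2 α β).2)
              rwa [one_mul] at this
        _ = C * r := by simp
    have hmain := ih N hN ξ hξ w hw0 hw M hM ft hftm hftb
    have hone := hJ1 ξ hξ t
    calc ∑ Y : Fin N → 𝒳, J ξ (t+1) Y * |empInt f Y - m|
        = ∑ X : Fin N → 𝒳, J ξ t X *
          ∑ Y : Fin N → 𝒳, (∏ i, K (X i) (empNbhd ξ X i) (Y i)) * |empInt f Y - m| := by
          simp only [hJs, Finset.sum_mul, Finset.mul_sum]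
          rw [Finset.sum_comm]
          refine Finset.sum_congr rfl fun X _ => Finset.sum_congr rfl fun Y _ => ?_
          ring
      _ ≤ ∑ X : Fin N → 𝒳, J ξ t X *
          (2 * M * (1 / Real.sqrt N) + (M * L * ∑ x, (w + E x X) + |empInt ft X - m|)) :=
          Finset.sum_le_sum fun X _ => mul_le_mul_of_nonneg_left (hX X) (hJnn ξ hξ t X)
      _ = 2 * M * (1 / Real.sqrt N) + M * L * (∑ x, (w + ∑ X : Fin N → 𝒳, J ξ t X * E x X)) +
          ∑ X : Fin N → 𝒳, J ξ t X * |empInt ft X - m| := by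
          have e1 : ∑ x, ∑ X : Fin N → 𝒳, J ξ t X * E x X =
              ∑ X : Fin N → 𝒳, J ξ t X * ∑ x, E x X := by
            rw [Finset.sum_comm]; simp only [Finset.mul_sum]
          simp only [Finset.sum_add_distrib, mul_add]
          rw [e1]
          simp only [← Finset.sum_mul, hone, one_mul, ← add_assoc]
          congr 2
          rw [Finset.mul_sum]
          exact Finset.sum_congr rfl fun X _ => by ring
      _ ≤ 2 * M * r + M * L * (∑ x : 𝒳, (r + C * r)) + M * C * r := by
          have : w ≤ r := by rw [hr]; linarith
          have h1r : 1 / Real.sqrt N ≤ r := by rw [hr]; linarith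
          gcongr with x _
          exact hEb x
      _ = _ := by
          simp only [Finset.sum_const, Finset.card_univ, nsmul_eq_mul]
          ring

/-- the uncontrolled case. If |𝒰| = 1 there is a unique policy (ensemble)
𝛑 (the constant one), with generated mean field ensemble 𝛍 = Ψ(𝛑). Under Assumption (W)
(with P Lipschitz), for every measurable f : 𝒳×[0,1] → ℝ with |f| ≤ M_f and every t ∈ 𝒯:
E[|𝛍^N_t(f) − 𝛍_t(f)|] → 0 as N → ∞; moreover, if ‖W_N − W‖_{L∞→L1} = O(1/√N), then
this convergence is at rate O(1/√N). -/
theorem uncontrolled_empirical_convergence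
    {𝒳 𝒰 : Type*} [Fintype 𝒳] [DecidableEq 𝒳] [Nonempty 𝒳] [Fintype 𝒰] [Nonempty 𝒰]
    (hcard : Fintype.card 𝒰 = 1)
    (T : ℕ) (μ0 : 𝒳 → ℝ) (hμ0 : μ0 ∈ simplex 𝒳)
    (P : 𝒳 → 𝒰 → (𝒳 → ℝ) → 𝒳 → ℝ) (hP : IsKernel P)
    (LP : ℝ) (hPLip : KernelLipschitz P LP)
    (W : ℝ → ℝ → ℝ) (hW : IsGraphon W)
    (ξ : (N : ℕ) → Fin N → Fin N → ℝ) (hξ : ∀ N, IsEdgeWeights (ξ N))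
    (hWconv : OpConvergesTo (fun N => stepGraphon (ξ N)) W)
    (μ : ℕ → ℝ → 𝒳 → ℝ)
    (hμ : IsMeanFieldOf W P μ0 (fun _ _ _ _ => (1:ℝ)) μ) :
    (∀ t < T, ∀ (Mf : ℝ) (f : 𝒳 → ℝ → ℝ), (∀ x, Measurable (f x)) → (∀ x α, |f x α| ≤ Mf) →
      ∀ ε > (0:ℝ), ∃ N₀ : ℕ, ∀ N > N₀,
        (∑ X : Fin N → 𝒳,
            jointLaw P μ0 (ξ N) (fun _ _ _ _ => (1:ℝ)) t X *
              |empInt f X - mfInt f (μ t)|) ≤ ε) ∧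
    (OpRateSqrt (fun N => stepGraphon (ξ N)) W →
      ∀ t < T, ∀ (Mf : ℝ) (f : 𝒳 → ℝ → ℝ), (∀ x, Measurable (f x)) → (∀ x α, |f x α| ≤ Mf) →
        ∃ C : ℝ, ∀ N : ℕ, 1 ≤ N →
          (∑ X : Fin N → 𝒳,
              jointLaw P μ0 (ξ N) (fun _ _ _ _ => (1:ℝ)) t X *
                |empInt f X - mfInt f (μ t)|) ≤ C / Real.sqrt N) := by
  obtain ⟨K, hKdef⟩ : ∃ K : 𝒳 → (𝒳 → ℝ) → 𝒳 → ℝ, K = fun x ν x' => ∑ u, (1:ℝ) * P x u ν x' :=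
    ⟨_, rfl⟩
  obtain ⟨u0, hu0⟩ := Fintype.card_eq_one_iff.1 hcard
  have huniv : (Finset.univ : Finset 𝒰) = {u0} := by
    ext u; simp [hu0 u]
  have hKeq : ∀ x ν, K x ν = P x u0 ν := by
    intro x ν; ext x'
    simp [hKdef, huniv]
  have hK : ∀ x ν, ν ∈ subProb 𝒳 → K x ν ∈ simplex 𝒳 := by
    intro x ν hν; rw [hKeq]; exact hP x u0 ν hν
  have hL : ∀ x ν ν', ν ∈ subProb 𝒳 → ν' ∈ subProb 𝒳 →
      l1dist (K x ν) (K x ν') ≤ |LP| * l1dist ν ν' := by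
    intro x ν ν' hν hν'
    rw [hKeq, hKeq]
    refine (hPLip x u0 ν ν' hν hν').trans ?_
    exact mul_le_mul_of_nonneg_right (le_abs_self _) (Finset.sum_nonneg fun _ _ => abs_nonneg _)
  have main := main_bound hμ0 (abs_nonneg LP) hK hL hW hμ.1 hμ.2.1
    (fun t α hα x' => by
      rw [hμ.2.2 t α hα x', hKdef]) (fun {N} ξ => jointLaw P μ0 ξ (fun _ _ _ _ => (1:ℝ)))
    (fun _ _ => rfl) (fun _ _ _ => by subst hKdef; rfl)
  have hM0 : ∀ (Mf : ℝ) (f : 𝒳 → ℝ → ℝ), (∀ x α, |f x α| ≤ Mf) → 0 ≤ Mf := fun Mf f h =>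
    (abs_nonneg _).trans (h (Classical.arbitrary 𝒳) 0)
  constructor
  · intro t _ Mf f hf hfb ε hε
    obtain ⟨C, hC, hmain⟩ := main t
    have hM := hM0 Mf f hfb
    set A := Mf * C + 1 with hA
    have hApos : 0 < A := by positivity
    obtain ⟨N1, hN1⟩ := hWconv (ε / (2 * A)) (by positivity)
    obtain ⟨N2, hN2⟩ := exists_nat_gt ((2 * A / ε) ^ 2)
    refine ⟨max N1 N2, fun N hN => ?_⟩
    have hNN1 : N1 ≤ N := (le_max_left _ _).trans hN.le
    have hNN2 : N2 ≤ N := (le_max_right _ _).trans hN.le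
    have hNpos : 1 ≤ N := by omega
    refine (hmain N hNpos (ξ N) (hξ N) (ε / (2 * A)) (by positivity) (hN1 N hNN1) Mf hM f hf
      hfb).trans ?_
    have hs : 2 * A / ε ≤ Real.sqrt N := by
      apply Real.le_sqrt_of_sq_le
      exact hN2.le.trans (by exact_mod_cast hNN2)
    have hs' : 1 / Real.sqrt N ≤ ε / (2 * A) := by
      have := one_div_le_one_div_of_le (by positivity) hs
      rwa [one_div_div] at this
    calc Mf * C * (1 / Real.sqrt N + ε / (2 * A)) ≤ A * (ε / (2 * A) + ε / (2 * A)) := by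
          gcongr
          linarith
      _ = ε := by field_simp; ring
  · rintro ⟨C', hC'⟩ t _ Mf f hf hfb
    obtain ⟨C, hC, hmain⟩ := main t
    have hM := hM0 Mf f hfb
    refine ⟨Mf * C * (1 + C'), fun N hN => ?_⟩
    have hw0 : 0 ≤ C' / Real.sqrt N := by
      have := hC' N hN (fun _ => 0) measurable_const (by simp)
      simpa using this
    refine (hmain N hN (ξ N) (hξ N) _ hw0 (hC' N hN) Mf hM f hf hfb).trans (le_of_eq ?_)
    ring

end GMFG
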